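/- arXiv:2003.08722 — 2 statements merged into one kernel-verified Lean document; each statement's English description precedes it below -/
import Mathlib

section
/- (Salzmann's theorem) Let Λ = (λ_1, λ_2, …, λ_n) be a list of real numbers with λ_1 ≥ λ_2 ≥ … ≥ λ_n, such that ∑_{k=1}^n λ_k ≥ 0 and λ_k + λ_{n−k+1} ≤ (2/n)·∑_{j=1}^n λ_j for every k = 2, 3, …, ⌊(n+1)/2⌋. Then Λ is realizable. -/
open Polynomial Matrix Finset

/-- A list of real numbers is realizable if it is the spectrum (counted with
algebraic multiplicity) of an entrywise nonnegative real matrix. -/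
def RealRealizable {n : ℕ} (l : Fin n → ℝ) : Prop :=
  ∃ A : Matrix (Fin n) (Fin n) ℝ, (∀ i j, 0 ≤ A i j) ∧
    A.charpoly = ∏ i, (X - C (l i))

/-- Rank-one update which does not change the determinant. -/
lemma det_rank_one {n : ℕ} (B : Matrix (Fin n) (Fin n) ℝ) (z u v : Fin n → ℝ)
    (h : B *ᵥ z = u) (hv : v ⬝ᵥ z = 0) :
    (B + vecMulVec u v).det = B.det := by
  have : B + vecMulVec u v = B * (1 + vecMulVec z v) := by
    rw [Matrix.mul_add, Matrix.mul_one, Matrix.mul_vecMulVec, h]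
  rw [this, Matrix.det_mul, Matrix.vecMulVec_eq Unit, Matrix.det_one_add_replicateCol_mul_replicateRow,
    hv, add_zero, mul_one]

/-- The symmetric core matrix. -/
def coreD {n : ℕ} (p r : Fin n → ℝ) : Matrix (Fin n) (Fin n) ℝ :=
  fun i j => (if j = i then p i else 0) + (if j = i.rev then r i else 0)

lemma coreD_mulVec {n : ℕ} (p r v : Fin n → ℝ) (i : Fin n) :
    (coreD p r *ᵥ v) i = p i * v i + r i * v i.rev := by
  simp [coreD, Matrix.mulVec, dotProduct, add_mul, Finset.sum_add_distrib]

lemma coreD_mul {n : ℕ} (p r : Fin n → ℝ) (hp : ∀ i, p i.rev = p i) (hr : ∀ i, r i.rev = r i) :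
    coreD p r * coreD p (-r) = diagonal (fun i => p i ^ 2 - r i ^ 2) := by
  ext i j
  have := coreD_mulVec p r (fun k => coreD p (-r) k j) i
  rw [Matrix.mul_apply]
  change ∑ k : Fin n, coreD p r i k * coreD p (-r) k j = _ at this
  rw [this]
  simp only [coreD, Pi.neg_apply, hp, hr, Fin.rev_rev, Matrix.diagonal_apply]
  by_cases h1 : j = i <;> by_cases h2 : j = i.rev <;> simp [h1, h2, eq_comm] <;> grind

lemma coreD_det_neg {n : ℕ} (p r : Fin n → ℝ) (h0 : ∀ i, i.rev = i → r i = 0) :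
    (coreD p (-r)).det = (coreD p r).det := by
  set s : Fin n → ℝ := fun i => if i ≤ i.rev then 1 else -1 with hs
  have h1 : coreD p (-r) = diagonal s * coreD p r * diagonal s := by
    ext i j
    rw [Matrix.mul_diagonal, Matrix.diagonal_mul]
    simp only [coreD, hs, Pi.neg_apply]
    by_cases h1 : i.rev = i
    · have := h0 i h1
      by_cases h2 : j = i
      · subst h2; simp [h1, this]
      · simp [h1, this, h2]
    · by_cases h2 : j = i
      · subst h2
        have : ¬ (j = j.rev) := fun h => h1 h.symm
        simp only [this, if_true, if_false]
        split_ifs <;> ring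
      · by_cases h3 : j = i.rev
        · subst h3
          simp only [h2, if_true, if_false, Fin.rev_rev]
          rcases lt_or_gt_of_ne h1 with h | h
          · simp [h.le, not_le.2 h]
          · simp [h.le, not_le.2 h]
        · simp [h2, h3]
  have h2 : (diagonal s).det * (diagonal s).det = 1 := by
    rw [Matrix.det_diagonal, ← Finset.prod_mul_distrib]
    apply Finset.prod_eq_one
    intro i _
    simp only [hs]; split_ifs <;> norm_num
  rw [h1, Matrix.det_mul, Matrix.det_mul]
  linear_combination (coreD p r).det * h2

lemma coreD_charpoly {n : ℕ} (l p r : Fin n → ℝ)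
    (hp : ∀ i, p i = (l i + l i.rev) / 2) (hr : ∀ i, r i = |l i - l i.rev| / 2) :
    (coreD p r).charpoly = ∏ i, (X - C (l i)) := by
  have hm : (∏ i, (X - C (l i))).Monic := monic_prod_of_monic _ _ fun i _ => monic_X_sub_C _
  have hc := (coreD p r).charpoly_monic
  have hsq : (coreD p r).charpoly ^ 2 = (∏ i, (X - C (l i))) ^ 2 := by
    apply Polynomial.funext
    intro x
    have e : scalar (Fin n) x - coreD p r = coreD (fun i => x - p i) (-r) := by
      ext i j
      simp only [Matrix.scalar_apply, Matrix.sub_apply, Matrix.diagonal_apply, coreD, Pi.neg_apply]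
      by_cases h1 : j = i
      · subst h1; by_cases h2 : j = j.rev
        · simp only [if_true, if_pos h2]; ring
        · simp only [if_true, if_neg h2]; ring
      · have h1' : ¬ i = j := fun h => h1 h.symm
        simp only [if_neg h1, if_neg h1']
        split_ifs <;> ring
    have h0 : ∀ i : Fin n, i.rev = i → r i = 0 := by
      intro i hi; rw [hr, hi]; simp
    have hdet : (coreD (fun i => x - p i) (-r)).det ^ 2 = ∏ i, ((x - p i) ^ 2 - r i ^ 2) := by
      have := congrArg Matrix.det (coreD_mul (fun i => x - p i) r
        (by intro i; simp only [hp, Fin.rev_rev]; ring)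
        (by intro i; simp only [hr, Fin.rev_rev]; rw [abs_sub_comm]))
      rw [Matrix.det_mul, Matrix.det_diagonal, ← coreD_det_neg _ _ h0] at this
      rw [← this, sq]
    rw [eval_pow, eval_pow, Matrix.eval_charpoly, e, hdet, eval_prod]
    have h3 : ∀ i, (x - p i) ^ 2 - r i ^ 2 = (x - l i) * (x - l i.rev) := by
      intro i
      rw [hp, hr, div_pow, sq_abs]; ring
    simp only [h3, eval_sub, eval_X, eval_C]
    rw [Finset.prod_mul_distrib, sq]
    congr 1
    exact Equiv.prod_comp Fin.revPerm (fun i => x - l i)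
  rcases sq_eq_sq_iff_eq_or_eq_neg.1 hsq with h | h
  · exact h
  · exfalso
    have h1 := congrArg leadingCoeff h
    rw [leadingCoeff_neg, hc.leadingCoeff, hm.leadingCoeff] at h1
    norm_num at h1

/-- **Salzmann theorem.** -/
theorem salzmann (n : ℕ) (l : Fin n → ℝ) (hanti : Antitone l)
    (hsum : 0 ≤ ∑ i, l i)
    (hcond : ∀ (k : ℕ) (hk2 : 2 ≤ k) (hk : k ≤ (n + 1) / 2),
      l ⟨k - 1, by omega⟩ + l ⟨n - k, by omega⟩ ≤ (2 / (n : ℝ)) * ∑ j, l j) :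
    RealRealizable l := by
  rcases n with _ | N
  · exact ⟨1, fun i => i.elim0, by simp [Matrix.charpoly]⟩
  have hNpos : (0 : ℝ) < ((N + 1 : ℕ) : ℝ) := by positivity
  obtain ⟨m, hm⟩ : ∃ m : ℝ, m = (∑ i, l i) / ((N + 1 : ℕ) : ℝ) := ⟨_, rfl⟩
  have hm0 : 0 ≤ m := by rw [hm]; positivity
  have hmsum : ∑ i, l i = ((N + 1 : ℕ) : ℝ) * m := by rw [hm]; field_simp
  obtain ⟨p, hp⟩ : ∃ p : Fin (N + 1) → ℝ, ∀ i, p i = (l i + l i.rev) / 2 := ⟨_, fun _ => rfl⟩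
  obtain ⟨r, hr⟩ : ∃ r : Fin (N + 1) → ℝ, ∀ i, r i = |l i - l i.rev| / 2 := ⟨_, fun _ => rfl⟩
  obtain ⟨w, hw⟩ : ∃ w : Fin (N + 1) → ℝ, ∀ i, w i = (l 0 - (p i + r i)) / 2 :=
    ⟨_, fun _ => rfl⟩
  obtain ⟨q, hq⟩ : ∃ q : Fin (N + 1) → ℝ, ∀ i, q i = m - p i := ⟨_, fun _ => rfl⟩
  obtain ⟨f, hf⟩ : ∃ f : Fin (N + 1) → ℝ,
      ∀ i, f i = (if i = 0 then 1 else 0) + (if i = Fin.last N then 1 else 0) :=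
    ⟨_, fun _ => rfl⟩
  have hl0 : ∀ i, l i ≤ l 0 := fun i => hanti (Fin.zero_le i)
  have hlN : ∀ i, l (Fin.last N) ≤ l i := fun i => hanti (Fin.le_last i)
  have hprev : ∀ i, p i.rev = p i := by
    intro i; simp only [hp, Fin.rev_rev]; ring
  have hrrev : ∀ i, r i.rev = r i := by
    intro i; simp only [hr, Fin.rev_rev]; rw [abs_sub_comm]
  have hwrev : ∀ i, w i.rev = w i := by
    intro i; rw [hw, hw, hprev, hrrev]
  have hr0 : ∀ i, 0 ≤ r i := by intro i; rw [hr]; positivity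
  -- the maximum of a pair
  have hmax : ∀ i, p i + r i = l i ∨ p i + r i = l i.rev := by
    intro i
    rw [hp, hr]
    rcases abs_cases (l i - l i.rev) with h | h
    · left; rw [h.1]; ring
    · right; rw [h.1]; ring
  have hw0 : ∀ i, 0 ≤ w i := by
    intro i
    rw [hw]
    rcases hmax i with h | h <;> rw [h]
    · linarith [hl0 i]
    · linarith [hl0 i.rev]
  have hpN : ∀ i, p i + r i + l (Fin.last N) ≤ 2 * p i := by
    intro i
    rcases hmax i with h | h <;> rw [h, hp]
    · linarith [hlN i.rev]
    · linarith [hlN i]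
  have hpz : p 0 = (l 0 + l (Fin.last N)) / 2 := by rw [hp, Fin.rev_zero]
  have hrz : r 0 = (l 0 - l (Fin.last N)) / 2 := by
    rw [hr, Fin.rev_zero, abs_of_nonneg (sub_nonneg.2 (hl0 _))]
  have hpl : p (Fin.last N) = (l 0 + l (Fin.last N)) / 2 := by
    rw [← hpz, ← hprev 0, Fin.rev_zero]
  have hrl : r (Fin.last N) = (l 0 - l (Fin.last N)) / 2 := by
    rw [← hrz, ← hrrev 0, Fin.rev_zero]
  have hwz : w 0 = 0 := by rw [hw, hpz, hrz]; ring
  have hwl : w (Fin.last N) = 0 := by rw [hw, hpl, hrl]; ring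
  have hmN : l (Fin.last N) ≤ m := by
    have : ∑ _i : Fin (N + 1), l (Fin.last N) ≤ ∑ i, l i :=
      Finset.sum_le_sum fun i _ => hlN i
    rw [hmsum, Finset.sum_const, Finset.card_univ, Fintype.card_fin, nsmul_eq_mul] at this
    exact le_of_mul_le_mul_left this hNpos
  have hpm : ∀ i, i ≠ 0 → i ≠ Fin.last N → p i ≤ m := by
    have key : ∀ i : Fin (N + 1), i ≠ 0 → (i : ℕ) + 1 ≤ (N + 1 + 1) / 2 → p i ≤ m := by
      intro i hi0 hi
      have hi0' : (i : ℕ) ≠ 0 := fun h => hi0 (Fin.ext h)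
      have := hcond (i + 1) (by omega) hi
      have e1 : (⟨(i : ℕ) + 1 - 1, by omega⟩ : Fin (N + 1)) = i := Fin.ext (by simp)
      have e2 : (⟨N + 1 - ((i : ℕ) + 1), by omega⟩ : Fin (N + 1)) = i.rev :=
        Fin.ext (by simp [Fin.val_rev])
      rw [e1, e2] at this
      rw [hp, hm]
      have e3 : 2 / ((N + 1 : ℕ) : ℝ) * ∑ j, l j = 2 * ((∑ j, l j) / ((N + 1 : ℕ) : ℝ)) := by ring
      rw [e3] at this
      linarith
    intro i hi0 hil
    by_cases h : (i : ℕ) + 1 ≤ (N + 1 + 1) / 2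
    · exact key i hi0 h
    · rw [← hprev]
      apply key
      · intro h'
        apply hil
        rw [← Fin.rev_rev i, h', Fin.rev_zero]
      · rw [Fin.val_rev]
        omega
  have hqsum : ∑ i, q i = 0 := by
    have h1 : ∑ i : Fin (N + 1), l i.rev = ∑ i, l i := Equiv.sum_comp Fin.revPerm l
    simp only [hq, hp, Finset.sum_sub_distrib, ← Finset.sum_div, Finset.sum_add_distrib, h1,
      hmsum]
    simp
  have hfsum : ∑ i, f i = 2 := by
    simp only [hf, Finset.sum_add_distrib]
    simp; norm_num
  refine ⟨coreD p r + vecMulVec w f + vecMulVec (fun _ => 1) q, ?_, ?_⟩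
  · intro i j
    simp only [Matrix.add_apply, vecMulVec_apply, coreD, one_mul]
    have hfj : 0 ≤ f j := by rw [hf]; split_ifs <;> norm_num
    have hwf := mul_nonneg (hw0 i) hfj
    have hrt : 0 ≤ (if j = i.rev then r i else 0) := by
      split_ifs
      · exact hr0 i
      · exact le_rfl
    by_cases hji : j = i
    · subst hji
      rw [if_pos rfl, hq]
      linarith
    rw [if_neg hji]
    by_cases hj : j = 0 ∨ j = Fin.last N
    · have hqj : q j = m - (l 0 + l (Fin.last N)) / 2 := by
        rcases hj with h | h
        · rw [hq, h, hpz]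
        · rw [hq, h, hpl]
      by_cases hi : i = 0 ∨ i = Fin.last N
      · have hjr : j = i.rev := by
          rcases hj with h | h <;> rcases hi with h' | h' <;> subst h <;> subst h' <;>
            first | exact absurd rfl hji | simp
        have hri : r i = (l 0 - l (Fin.last N)) / 2 := by
          rcases hi with h | h
          · rw [h, hrz]
          · rw [h, hrl]
        rw [if_pos hjr, hri, hqj]
        linarith
      · push Not at hi
        have hf1 : 1 ≤ f j := by
          rw [hf]
          rcases hj with h | h
          · rw [if_pos h]; split_ifs <;> norm_num
          · rw [if_pos h]; split_ifs <;> norm_num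
        have h1 : w i ≤ w i * f j := le_mul_of_one_le_right (hw0 i) hf1
        have h2 := hpN i
        have h3 := hpm i hi.1 hi.2
        have h4 := hw i
        linarith
    · push Not at hj
      have := hpm j hj.1 hj.2
      have := hq j
      linarith
  · rw [← coreD_charpoly l p r hp hr]
    apply Polynomial.eq_of_infinite_eval_eq
    apply (Set.Ioi_infinite (l 0)).mono
    intro x hx
    have hx : l 0 < x := hx
    have hxa : ∀ i, x - (p i + r i) ≠ 0 := by
      intro i
      have := hw0 i
      rw [hw] at this
      linarith
    have hx0 : x - l 0 ≠ 0 := by linarith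
    rw [Set.mem_setOf_eq, Matrix.eval_charpoly, Matrix.eval_charpoly]
    have e1 : scalar (Fin (N + 1)) x - (coreD p r + vecMulVec w f + vecMulVec (fun _ => 1) q)
        = (scalar (Fin (N + 1)) x - coreD p r + vecMulVec (-w) f)
          + vecMulVec (fun _ => -1) q := by
      ext i j
      simp [vecMulVec_apply]; ring
    have hcore : ∀ (v : Fin (N + 1) → ℝ) i, ((scalar (Fin (N + 1)) x - coreD p r) *ᵥ v) i
        = x * v i - (p i * v i + r i * v i.rev) := by
      intro v i
      rw [Matrix.sub_mulVec, Pi.sub_apply, coreD_mulVec]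
      simp [Matrix.mulVec_diagonal]
    rw [e1, det_rank_one _ (fun _ => -1 / (x - l 0)), det_rank_one _ (fun i => - w i / (x - (p i + r i)))]
    · ext i
      rw [hcore, hprev, hrrev, hwrev, Pi.neg_apply]
      have := hxa i
      field_simp
      ring
    · simp only [dotProduct, hf, add_mul, Finset.sum_add_distrib]
      simp [hwz, hwl]
    · ext i
      rw [Matrix.add_mulVec, Pi.add_apply, hcore, Matrix.vecMulVec_mulVec]
      simp only [dotProduct, ← Finset.sum_mul, hfsum]
      simp only [Pi.smul_apply, Pi.neg_apply, MulOpposite.smul_eq_mul_unop, MulOpposite.unop_op, hw]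
      field_simp
      ring
    · simp only [dotProduct, ← Finset.sum_mul, hqsum, zero_mul]
end

section
/- (Complex Suleimanova theorem) Let Λ = (λ_1, λ_2, …, λ_n) be a list of complex numbers that is closed under complex conjugation, with λ_1 real, and such that for every i ≥ 2 one has Re(λ_i) ≤ 0 and |Re(λ_i)| ≥ |Im(λ_i)|. Then Λ is realizable if and only if ∑_{i=1}^n λ_i ≥ 0 (this sum is real since Λ is closed under conjugation). -/
open Polynomial Matrix Finset

/-- A list of complex numbers is realizable if it is the spectrum (counted with
algebraic multiplicity) of an entrywise nonnegative real matrix. -/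
def Realizable {n : ℕ} (l : Fin n → ℂ) : Prop :=
  ∃ A : Matrix (Fin n) (Fin n) ℝ, (∀ i j, 0 ≤ A i j) ∧
    (A.map (Complex.ofReal)).charpoly = ∏ i, (X - C (l i))

/-- A monic real polynomial whose lower coefficients are nonpositive is the characteristic
polynomial of a nonnegative matrix (its companion matrix). -/
lemma exists_nonneg_companion (p : ℝ[X]) (hp : p.Monic) (n : ℕ) (hn : p.natDegree = n)
    (hc : ∀ k < n, p.coeff k ≤ 0) :
    ∃ A : Matrix (Fin n) (Fin n) ℝ, (∀ i j, 0 ≤ A i j) ∧ A.charpoly = p := by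
  subst hn
  have hm : minpoly ℝ (AdjoinRoot.powerBasis hp.ne_zero).gen = p :=
    AdjoinRoot.minpoly_powerBasis_gen_of_monic hp
  have hdim : (AdjoinRoot.powerBasis hp.ne_zero).dim = p.natDegree := by simp
  rw [← hdim] at hc ⊢
  refine ⟨Algebra.leftMulMatrix (AdjoinRoot.powerBasis hp.ne_zero).basis
    (AdjoinRoot.powerBasis hp.ne_zero).gen, ?_, ?_⟩
  · intro i j
    rw [PowerBasis.leftMulMatrix, PowerBasis.minpolyGen_eq, hm]
    simp only [Matrix.of_apply]
    split_ifs
    · have := hc i i.2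
      linarith
    · exact zero_le_one
    · exact le_rfl
  · rw [charpoly_leftMulMatrix, hm]

/-- The coefficient conditions carried through the induction. -/
structure GoodPoly (g : ℝ[X]) (m : ℕ) (s : ℝ) : Prop where
  monic : g.Monic
  deg : g.natDegree = m
  s_nonneg : 0 ≤ s
  coeff_nonneg : ∀ k, 0 ≤ g.coeff k
  step : ∀ k < m, g.coeff k ≤ s * g.coeff (k + 1)

lemma GoodPoly.one : GoodPoly 1 0 0 where
  monic := monic_one
  deg := natDegree_one
  s_nonneg := le_rfl
  coeff_nonneg k := by rw [coeff_one]; split_ifs <;> norm_num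
  step k hk := by omega

lemma GoodPoly.mul_linear {g : ℝ[X]} {m : ℕ} {s : ℝ} (hg : GoodPoly g m s) {a : ℝ} (ha : 0 ≤ a) :
    GoodPoly (g * (X + C a)) (m + 1) (s + a) where
  monic := hg.monic.mul (monic_X_add_C a)
  deg := by rw [hg.monic.natDegree_mul (monic_X_add_C a), hg.deg, natDegree_X_add_C]
  s_nonneg := add_nonneg hg.s_nonneg ha
  coeff_nonneg k := by
    have h0 := hg.coeff_nonneg
    rcases k with _ | k
    · simp only [mul_add, coeff_add, coeff_mul_X_zero, coeff_mul_C]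
      have := mul_nonneg (h0 0) ha
      linarith
    · simp only [mul_add, coeff_add, coeff_mul_X, coeff_mul_C]
      have := mul_nonneg (h0 (k + 1)) ha
      linarith [h0 k]
  step k hk := by
    have h0 := hg.coeff_nonneg
    have hs := hg.s_nonneg
    rcases k with _ | k
    · simp only [mul_add, coeff_add, coeff_mul_X, coeff_mul_X_zero, coeff_mul_C]
      have h1 := mul_nonneg hs (h0 0)
      have h2 := mul_nonneg (mul_nonneg (add_nonneg hs ha) ha) (h0 1)
      nlinarith
    · simp only [mul_add, coeff_add, coeff_mul_X, coeff_mul_C]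
      have h1 := hg.step k (by omega)
      have h2 := mul_nonneg (mul_nonneg (add_nonneg hs ha) ha) (h0 (k + 1 + 1))
      nlinarith

lemma GoodPoly.mul_quad {g : ℝ[X]} {m : ℕ} {s : ℝ} (hg : GoodPoly g m s) {a c : ℝ} (ha : 0 ≤ a)
    (hc : 0 ≤ c) (hca : c ≤ a * a) :
    GoodPoly (g * (X ^ 2 + C a * X + C c)) (m + 2) (s + a) where
  monic := hg.monic.mul (by monicity!)
  deg := by
    have h1 : (X ^ 2 + C a * X + C c : ℝ[X]).Monic := by monicity!
    rw [hg.monic.natDegree_mul h1, hg.deg]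
    congr 1
    compute_degree!
  s_nonneg := add_nonneg hg.s_nonneg ha
  coeff_nonneg k := by
    have h0 := hg.coeff_nonneg
    have e : g * (X ^ 2 + C a * X + C c) = g * X * X + C a * (g * X) + C c * g := by ring
    rw [e]
    rcases k with _ | _ | k <;>
    simp only [coeff_add, coeff_mul_X, coeff_mul_X_zero, coeff_C_mul, zero_add]
    · have := mul_nonneg hc (h0 0)
      linarith
    · have := mul_nonneg hc (h0 1)
      have := mul_nonneg ha (h0 0)
      linarith
    · have := mul_nonneg hc (h0 (k + 1 + 1))
      have := mul_nonneg ha (h0 (k + 1))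
      linarith [h0 k]
  step k hk := by
    have h0 := hg.coeff_nonneg
    have hs := hg.s_nonneg
    have hsa := add_nonneg hs ha
    have e : g * (X ^ 2 + C a * X + C c) = g * X * X + C a * (g * X) + C c * g := by ring
    rw [e]
    have h2 := mul_nonneg (mul_nonneg hsa hc) (h0 (k + 1))
    have h3 := mul_nonneg (mul_nonneg hs ha) (h0 k)
    have h4 := mul_le_mul_of_nonneg_right hca (h0 k)
    rcases k with _ | _ | k <;>
    simp only [coeff_add, coeff_mul_X, coeff_mul_X_zero, coeff_C_mul, zero_add] at h2 h3 h4 ⊢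
    · nlinarith
    · have h1 := mul_nonneg hs (h0 0)
      nlinarith [mul_nonneg hs (h0 1)]
    · have h1 := hg.step k (by omega)
      nlinarith

/-- Main induction. -/
lemma exists_goodPoly (N : ℕ) : ∀ t : Multiset ℂ, t.card = N →
    t.map (starRingEnd ℂ) = t →
    (∀ z ∈ t, z.re ≤ 0 ∧ |z.im| ≤ |z.re|) →
    ∃ g : ℝ[X], GoodPoly g N (-(t.sum).re) ∧
      g.map Complex.ofRealHom = (t.map fun z => X - C z).prod := by
  induction N using Nat.strong_induction_on with
  | _ N ih =>
  intro t hN hconj ht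
  rcases t.empty_or_exists_mem with rfl | ⟨z, hz⟩
  · simp only [Multiset.card_zero] at hN
    subst hN
    exact ⟨1, by simpa using GoodPoly.one, by simp⟩
  obtain ⟨u, rfl⟩ := Multiset.exists_cons_of_mem hz
  have hzz := ht z hz
  by_cases him : z.im = 0
  · have hzc : (starRingEnd ℂ) z = z := Complex.conj_eq_iff_im.2 him
    rw [Multiset.map_cons, hzc, Multiset.cons_inj_right] at hconj
    rw [Multiset.card_cons] at hN
    subst hN
    obtain ⟨g, hg, hgm⟩ := ih u.card (by omega) u rfl hconj
      (fun w hw => ht w (Multiset.mem_cons_of_mem hw))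
    refine ⟨g * (X + C (-z.re)), ?_, ?_⟩
    · have := hg.mul_linear (a := -z.re) (by linarith [hzz.1])
      convert this using 1
      simp
    · have hzr : (z.re : ℂ) = z := Complex.ext (by simp) (by simp [him])
      rw [Polynomial.map_mul, hgm, Multiset.map_cons, Multiset.prod_cons, mul_comm]
      simp [hzr, sub_eq_add_neg]
  · have hzc : (starRingEnd ℂ) z ≠ z := fun h => him (Complex.conj_eq_iff_im.1 h)
    have hmem : (starRingEnd ℂ) z ∈ z ::ₘ u := by
      rw [← hconj]; exact Multiset.mem_map_of_mem _ hz
    have hmem' : (starRingEnd ℂ) z ∈ u := (Multiset.mem_cons.1 hmem).resolve_left hzc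
    obtain ⟨v, rfl⟩ := Multiset.exists_cons_of_mem hmem'
    rw [Multiset.map_cons, Multiset.map_cons, Complex.conj_conj, Multiset.cons_swap,
      Multiset.cons_inj_right, Multiset.cons_inj_right] at hconj
    rw [Multiset.card_cons, Multiset.card_cons] at hN
    subst hN
    obtain ⟨g, hg, hgm⟩ := ih v.card (by omega) v rfl hconj
      (fun w hw => ht w (Multiset.mem_cons_of_mem (Multiset.mem_cons_of_mem hw)))
    have hsq : z.im ^ 2 ≤ z.re ^ 2 := sq_le_sq.2 hzz.2
    refine ⟨g * (X ^ 2 + C (-2 * z.re) * X + C (z.re ^ 2 + z.im ^ 2)), ?_, ?_⟩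
    · have := hg.mul_quad (a := -2 * z.re) (c := z.re ^ 2 + z.im ^ 2) (by linarith [hzz.1])
        (by positivity) (by nlinarith [sq_nonneg z.re])
      convert this using 1
      simp; ring
    · rw [Polynomial.map_mul, hgm, Multiset.map_cons, Multiset.prod_cons, Multiset.map_cons,
        Multiset.prod_cons, mul_comm, ← mul_assoc]
      congr 1
      have e1 : z + (starRingEnd ℂ) z = 2 * z.re := by
        rw [Complex.add_conj]; push_cast; ring
      have e2 : z * (starRingEnd ℂ) z = (z.re ^ 2 + z.im ^ 2 : ℂ) := by
        rw [Complex.mul_conj, Complex.normSq_apply]; push_cast; ring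
      have e3 : (X - C z) * (X - C ((starRingEnd ℂ) z)) =
          X ^ 2 - C (z + (starRingEnd ℂ) z) * X + C (z * (starRingEnd ℂ) z) := by
        rw [C_add, C_mul]; ring
      rw [e3, e1, e2]
      simp
      ring

/-- **Complex Suleimanova theorem.** Let `(λ_1, …, λ_n)` be closed under complex
conjugation with `λ_1` real, and suppose `Re λ_i ≤ 0` and `|Re λ_i| ≥ |Im λ_i|` for
`i ≥ 2`. Then the list is realizable iff `∑ λ_i ≥ 0` (the sum being real). -/
theorem complex_suleimanova (n : ℕ) (hn : 0 < n) (l : Fin n → ℂ)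
    (hconj : Multiset.map (starRingEnd ℂ) (Finset.univ.val.map l) = Finset.univ.val.map l)
    (h1 : (l ⟨0, hn⟩).im = 0)
    (h : ∀ i : Fin n, i ≠ ⟨0, hn⟩ → (l i).re ≤ 0 ∧ |(l i).im| ≤ |(l i).re|) :
    Realizable l ↔ 0 ≤ (∑ i, l i).re := by
  constructor
  · rintro ⟨A, hA, hchar⟩
    have h2 := (A.map (Complex.ofReal)).trace_eq_neg_charpoly_nextCoeff
    rw [hchar, prod_X_sub_C_nextCoeff, neg_neg] at h2
    rw [← h2, Matrix.trace, Complex.re_sum]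
    exact Finset.sum_nonneg fun i _ => by simpa using hA i i
  · intro hsum
    obtain ⟨m, rfl⟩ : ∃ m, n = m + 1 := ⟨n - 1, by omega⟩
    change (l 0).im = 0 at h1
    change ∀ i : Fin (m + 1), i ≠ 0 → _ at h
    set t : Multiset ℂ := Finset.univ.val.map (fun i : Fin m => l i.succ) with ht
    have hval : Finset.univ.val.map l = l 0 ::ₘ t := by
      rw [Fin.univ_succ, ht]
      simp [Function.comp_def]
    have h0c : (starRingEnd ℂ) (l 0) = l 0 := Complex.conj_eq_iff_im.2 h1
    rw [hval, Multiset.map_cons, h0c, Multiset.cons_inj_right] at hconj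
    obtain ⟨g, hg, hgm⟩ := exists_goodPoly m t (by simp [ht]) hconj (by
      intro z hz
      obtain ⟨i, -, rfl⟩ := Multiset.mem_map.1 hz
      exact h i.succ (Fin.succ_ne_zero i))
    have hts : t.sum = ∑ i : Fin m, l i.succ := rfl
    have hr : -(t.sum).re ≤ (l 0).re := by
      rw [Fin.sum_univ_succ, ← hts, Complex.add_re] at hsum
      linarith
    have hmon : (g * (X - C (l 0).re)).Monic := hg.monic.mul (monic_X_sub_C _)
    obtain ⟨A, hA, hAp⟩ := exists_nonneg_companion (g * (X - C (l 0).re)) hmon (m + 1)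
      (by rw [hg.monic.natDegree_mul (monic_X_sub_C _), hg.deg, natDegree_X_sub_C]) (by
        intro k hk
        have hs := hg.s_nonneg
        rcases k with _ | k
        · simp only [mul_sub, coeff_sub, coeff_mul_X_zero, coeff_mul_C]
          have := mul_nonneg (hg.coeff_nonneg 0) (hs.trans hr)
          linarith
        · simp only [mul_sub, coeff_sub, coeff_mul_X, coeff_mul_C]
          have h3 := hg.step k (by omega)
          have h4 := mul_le_mul_of_nonneg_right hr (hg.coeff_nonneg (k + 1))
          linarith)
    refine ⟨A, hA, ?_⟩
    have h5 := A.charpoly_map Complex.ofRealHom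
    have h6 : A.map Complex.ofReal = A.map Complex.ofRealHom := rfl
    have hzr : ((l 0).re : ℂ) = l 0 := Complex.ext (by simp) (by simp [h1])
    rw [h6, h5, hAp, Polynomial.map_mul, hgm, Fin.prod_univ_succ, mul_comm, ht, Multiset.map_map]
    simp only [Polynomial.map_sub, map_X, map_C, Complex.ofRealHom_eq_coe, hzr]
    rfl
end
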